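/- arXiv:1710.02329 — 2 statements merged into one kernel-verified Lean document; each statement's English description precedes it below -/
import Mathlib

section
/- Fix an infinite data domain $D$. A register automaton (RA) is a tuple $(L,R,\Sigma,T)$ with finite sets $L$ of locations, $R$ of registers and $\Sigma$ of letters, and $T\subseteq L\times\Sigma\times\Phi(R)\times 2^R\times L$, where $\Phi(R)$ is the set of constraints built from $\mathsf{true}$ and atoms $(=r)$, $r\in R$, by conjunction and negation. A configuration is a pair $(\ell,\nu)\in L\times D^R$. On input $(a,d)\in\Sigma\times D$ a transition $(\ell,a,\varphi,\mathsf{up},\ell')\in T$ may be fired from $(\ell,\nu)$ if $(\nu,d)$ satisfies $\varphi$, where $(\nu,d)$ satisfies $(=r)$ iff $\nu(r)=d$; the successor is $(\ell',\nu[\mathsf{up}:=d])$. Let $\mathrm{post}(q,(a,d))$ be the set of successors of $q$, extended to sets of configurations by union and to data words (finite words over $\Sigma\times D$) by iteration. The RA is deterministic if always $|\mathrm{post}(q,(a,d))|\le 1$. A data word $w$ is synchronizing if $\mathrm{post}(L\times D^R,w)$ is a singleton. Given an initial location $\ell_i$ and an accepting location $\ell_f$, the language is the set of data words $w$ over which there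 is a run from $(\ell_i,\nu)$ to $(\ell_f,\nu')$ for some valuations $\nu,\nu'$. Let $\mathcal A=(L,R,\Sigma,T)$ be a deterministic register automaton with $k$ registers, with a designated initial location $\ell_i$ all of whose outgoing transitions update all registers, and such that the first step does not depend on the initial register contents, i.e. $\mathrm{post}((\ell_i,\nu),(a,d))=\mathrm{post}((\ell_i,\nu'),(a,d))$ for all valuations $\nu,\nu'$ and all inputs $(a,d)$ (for instance, all transitions leaving $\ell_i$ have guard $\mathsf{true}$). Let $\ell_f$ be a designated accepting location with no outgoing transitions, and suppose that every configuration whose location is not $\ell_f$ has exactly one successor on every input. Let $\mathcal A_{\mathsf{syn}}$ be the register automaton with locations $L\cup\{\mathsf{reset}\}$ ($\mathsf{reset}\notin L$), alphabet $\Sigma\cup\{\star\}$ ($\star\notin\Sigma$), the same registers, and transition relation obtained from $T$ by adding the following transitions, each with guard $\mathsf{true}$ and updating all registers: from $\ell_f$ to $\ell_f$ on every $a\in\Sigma\cup\{\star\}$; from $\ell_i$ to $\ell_i$ on $\star$; from $\mathsf{reset}$ to $\ell_i$ on every $a\in\Sigma\cup\{\star\}$; and from $\ell$ to $\mathsf{reset}$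 on $\star$ for every $\ell\in L\setminus\{\ell_i,\ell_f\}$. Then $\mathcal A_{\mathsf{syn}}$ is deterministic, and the language of $\mathcal A$ is nonempty if and only if $\mathcal A_{\mathsf{syn}}$ has a synchronizing data word. -/
/-- Register constraints over a set `R` of registers: built from the atom `true` and
atoms `= r` for `r ∈ R` using conjunction and negation. -/
inductive RC (R : Type*)
  | tt : RC R
  | req : R → RC R
  | conj : RC R → RC R → RC R
  | neg : RC R → RC R

/-- Satisfaction of a register constraint by a register valuation `ν` and a datum `d`. -/
def RC.sat {R D : Type*} (ν : R → D) (d : D) : RC R → Prop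
  | RC.tt => True
  | RC.req r => ν r = d
  | RC.conj φ ψ => RC.sat ν d φ ∧ RC.sat ν d ψ
  | RC.neg φ => ¬ RC.sat ν d φ

/-- A configuration: a location together with a register valuation. -/
abbrev Config (L R D : Type*) := L × (R → D)

/-- A transition: source location, letter, guard, update set, target location. -/
abbrev RATrans (L A R : Type*) := L × A × RC R × Set R × L

open Classical in
/-- The update `ν[up := d]` of a register valuation. -/
noncomputable def updVal {R D : Type*} (ν : R → D) (up : Set R) (d : D) : R → D :=
  fun r => if r ∈ up then d else ν r

/-- `post(q, (a, d))`: the set of successors of the configuration `q` on the input `(a, d)`, in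
the register automaton with transition relation `T`. -/
def post {L A R D : Type*} (T : Set (RATrans L A R)) (q : Config L R D) (i : A × D) :
    Set (Config L R D) :=
  {q' | ∃ (φ : RC R) (up : Set R) (ℓ' : L),
    (q.1, i.1, φ, up, ℓ') ∈ T ∧ RC.sat q.2 i.2 φ ∧ q' = (ℓ', updVal q.2 up i.2)}

/-- `post` of a set of configurations on a data word. -/
def postWord {L A R D : Type*} (T : Set (RATrans L A R)) (S : Set (Config L R D)) :
    List (A × D) → Set (Config L R D)
  | [] => S
  | i :: w => postWord T (⋃ q ∈ S, post T q i) w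

/-- `RARun T q w q'`: there is a run over the data word `w` from `q` to `q'`. -/
inductive RARun {L A R D : Type*} (T : Set (RATrans L A R)) :
    Config L R D → List (A × D) → Config L R D → Prop
  | nil (q : Config L R D) : RARun T q [] q
  | cons {q q' q'' : Config L R D} {i : A × D} {w : List (A × D)} :
      q' ∈ post T q i → RARun T q' w q'' → RARun T q (i :: w) q''

/-- The language of the register automaton with initial location `ℓi` and accepting
location `ℓf`; the initial register valuation is arbitrary. -/
def raLanguage (D : Type*) {L A R : Type*} (T : Set (RATrans L A R)) (ℓi ℓf : L) :
    Set (List (A × D)) :=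
  {w | ∃ ν ν' : R → D, RARun T (ℓi, ν) w (ℓf, ν')}

/-- Determinism: every configuration has at most one successor on every input. -/
def RADet (D : Type*) {L A R : Type*} (T : Set (RATrans L A R)) : Prop :=
  ∀ (q : Config L R D) (i : A × D), (post T q i).Subsingleton

/-- A synchronizing data word: it sends the set of all configurations to a single
configuration. -/
def IsSync (D : Type*) {L A R : Type*} (T : Set (RATrans L A R)) (w : List (A × D)) : Prop :=
  ∃ q : Config L R D, postWord T (Set.univ : Set (Config L R D)) w = {q}

/-- The transition relation of `A_syn`. Locations are `L ⊕ Unit`, where `Sum.inr ()` is `reset`;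
the alphabet is `A ⊕ Unit`, where `Sum.inr ()` is `★`. -/
def synT {L A R : Type*} (T : Set (RATrans L A R)) (ℓi ℓf : L) :
    Set (RATrans (L ⊕ Unit) (A ⊕ Unit) R) :=
  {t | (∃ ℓ a φ up ℓ', (ℓ, a, φ, up, ℓ') ∈ T ∧
          t = (Sum.inl ℓ, Sum.inl a, φ, up, Sum.inl ℓ'))
    ∨ (∃ b : A ⊕ Unit, t = (Sum.inl ℓf, b, RC.tt, Set.univ, Sum.inl ℓf))
    ∨ t = (Sum.inl ℓi, Sum.inr (), RC.tt, Set.univ, Sum.inl ℓi)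
    ∨ (∃ b : A ⊕ Unit, t = (Sum.inr (), b, RC.tt, Set.univ, Sum.inl ℓi))
    ∨ (∃ ℓ : L, ℓ ≠ ℓi ∧ ℓ ≠ ℓf ∧
          t = (Sum.inl ℓ, Sum.inr (), RC.tt, Set.univ, Sum.inr ()))}

theorem updVal_univ {R D : Type*} (ν : R → D) (d : D) : updVal ν Set.univ d = fun _ => d := by
  funext r
  simp [updVal]

theorem mem_postWord {L A R D : Type*} {T : Set (RATrans L A R)} {S : Set (Config L R D)}
    {w : List (A × D)} {q' : Config L R D} :
    q' ∈ postWord T S w ↔ ∃ q ∈ S, RARun T q w q' := by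
  induction w generalizing S with
  | nil =>
    constructor
    · exact fun h => ⟨q', h, .nil q'⟩
    · rintro ⟨q, hq, h⟩
      cases h
      exact hq
  | cons i w ih =>
    simp only [postWord, ih, Set.mem_iUnion]
    constructor
    · rintro ⟨p, ⟨q, hq, hp⟩, h⟩
      exact ⟨q, hq, .cons hp h⟩
    · rintro ⟨q, hq, h⟩
      cases h with
      | cons hp h => exact ⟨_, ⟨q, hq, hp⟩, h⟩

namespace RARun

theorem append {L A R D : Type*} {T : Set (RATrans L A R)} {q q' q'' : Config L R D}
    {v w : List (A × D)} (h : RARun T q v q') (h' : RARun T q' w q'') :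
    RARun T q (v ++ w) q'' := by
  induction h with
  | nil => exact h'
  | cons hp _ ih => exact .cons hp (ih h')

theorem unique {L A R D : Type*} {T : Set (RATrans L A R)} (hT : RADet D T)
    {q q₁ q₂ : Config L R D} {w : List (A × D)} (h₁ : RARun T q w q₁) (h₂ : RARun T q w q₂) :
    q₁ = q₂ := by
  induction h₁ with
  | nil =>
    cases h₂
    rfl
  | cons hp _ ih =>
    cases h₂ with
    | cons hp' h => exact ih (hT _ _ hp hp' ▸ h)

theorem exists_of_total {L A R D : Type*} {T : Set (RATrans L A R)}
    (hT : ∀ (q : Config L R D) (i : A × D), (post T q i).Nonempty)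
    (q : Config L R D) (w : List (A × D)) : ∃ q', RARun T q w q' := by
  induction w generalizing q with
  | nil => exact ⟨q, .nil q⟩
  | cons i w ih =>
    obtain ⟨p, hp⟩ := hT q i
    obtain ⟨q', h⟩ := ih p
    exact ⟨q', .cons hp h⟩

end RARun

section SynAutomaton

variable {L A R D : Type*} {T : Set (RATrans L A R)} {ℓi ℓf : L}

theorem post_synT_reset (ν : R → D) (i : (A ⊕ Unit) × D) :
    post (synT T ℓi ℓf) (Sum.inr (), ν) i = {(Sum.inl ℓi, fun _ => i.2)} := by
  ext q'
  simp only [post, synT, Set.mem_ofPred_eq, Set.mem_singleton_iff]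
  constructor
  · rintro ⟨φ, up, ℓ', h, -, rfl⟩
    simp only [Prod.mk.injEq, reduceCtorEq, false_and, and_false, exists_false, false_or,
      or_false, true_and] at h
    obtain ⟨b, -, -, rfl, rfl⟩ := h
    rw [updVal_univ]
  · rintro rfl
    exact ⟨.tt, Set.univ, _, .inr (.inr (.inr (.inl ⟨_, rfl⟩))), trivial, by rw [updVal_univ]⟩

theorem post_synT_final (hfin : ∀ a φ up ℓ', (ℓf, a, φ, up, ℓ') ∉ T) (ν : R → D)
    (i : (A ⊕ Unit) × D) :
    post (synT T ℓi ℓf) (Sum.inl ℓf, ν) i = {(Sum.inl ℓf, fun _ => i.2)} := by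
  ext q'
  simp only [post, synT, Set.mem_ofPred_eq, Set.mem_singleton_iff]
  constructor
  · rintro ⟨φ, up, ℓ', h, -, rfl⟩
    rcases h with ⟨ℓ, a, φ', up', ℓ'', hT, h⟩ | ⟨b, h⟩ | h | ⟨b, h⟩ | ⟨ℓ, -, hℓ, h⟩ <;>
      simp only [Prod.mk.injEq, Sum.inl.injEq, reduceCtorEq, false_and] at h
    · obtain ⟨rfl, -⟩ := h
      exact (hfin _ _ _ _ hT).elim
    · obtain ⟨-, -, -, rfl, rfl⟩ := h
      rw [updVal_univ]
    · obtain ⟨rfl, -, -, rfl, rfl⟩ := h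
      rw [updVal_univ]
    · exact (hℓ h.1.symm).elim
  · rintro rfl
    exact ⟨.tt, Set.univ, _, .inr (.inl ⟨_, rfl⟩), trivial, by rw [updVal_univ]⟩

theorem post_synT_init_star (hfin : ∀ a φ up ℓ', (ℓf, a, φ, up, ℓ') ∉ T) (ν : R → D) (d : D) :
    post (synT T ℓi ℓf) (Sum.inl ℓi, ν) (Sum.inr (), d) = {(Sum.inl ℓi, fun _ => d)} := by
  by_cases hif : ℓi = ℓf
  · subst hif
    exact post_synT_final hfin ν _
  ext q'
  simp only [post, synT, Set.mem_ofPred_eq, Set.mem_singleton_iff]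
  constructor
  · rintro ⟨φ, up, ℓ', h, -, rfl⟩
    rcases h with ⟨ℓ, a, φ', up', ℓ'', hT, h⟩ | ⟨b, h⟩ | h | ⟨b, h⟩ | ⟨ℓ, hℓ, -, h⟩ <;>
      simp only [Prod.mk.injEq, Sum.inl.injEq, reduceCtorEq, false_and, and_false] at h
    · exact (hif h.1).elim
    · obtain ⟨-, -, -, rfl, rfl⟩ := h
      rw [updVal_univ]
    · exact (hℓ h.1.symm).elim
  · rintro rfl
    exact ⟨.tt, Set.univ, _, .inr (.inr (.inl rfl)), trivial, by rw [updVal_univ]⟩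

theorem post_synT_star {ℓ : L} (hi : ℓ ≠ ℓi) (hf : ℓ ≠ ℓf) (ν : R → D) (d : D) :
    post (synT T ℓi ℓf) (Sum.inl ℓ, ν) (Sum.inr (), d) = {(Sum.inr (), fun _ => d)} := by
  ext q'
  simp only [post, synT, Set.mem_ofPred_eq, Set.mem_singleton_iff]
  constructor
  · rintro ⟨φ, up, ℓ', h, -, rfl⟩
    rcases h with ⟨ℓ, a, φ', up', ℓ'', hT, h⟩ | ⟨b, h⟩ | h | ⟨b, h⟩ | ⟨ℓ, -, -, h⟩ <;>
      simp only [Prod.mk.injEq, Sum.inl.injEq, reduceCtorEq, false_and, and_false] at h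
    · exact (hf h.1).elim
    · exact (hi h.1).elim
    · obtain ⟨-, -, -, rfl, rfl⟩ := h
      rw [updVal_univ]
  · rintro rfl
    exact ⟨.tt, Set.univ, _, .inr (.inr (.inr (.inr ⟨ℓ, hi, hf, rfl⟩))), trivial,
      by rw [updVal_univ]⟩

theorem post_synT_letter {ℓ : L} (hf : ℓ ≠ ℓf) (ν : R → D) (a : A) (d : D) :
    post (synT T ℓi ℓf) (Sum.inl ℓ, ν) (Sum.inl a, d) =
      Prod.map Sum.inl id '' post T (ℓ, ν) (a, d) := by
  ext q'
  simp only [post, synT, Set.mem_ofPred_eq, Set.mem_image]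
  constructor
  · rintro ⟨φ, up, ℓ', h, hsat, rfl⟩
    rcases h with ⟨ℓ, a, φ', up', ℓ'', hT, h⟩ | ⟨b, h⟩ | h | ⟨b, h⟩ | ⟨ℓ, -, -, h⟩ <;>
      simp only [Prod.mk.injEq, Sum.inl.injEq, reduceCtorEq, false_and, and_false] at h
    · obtain ⟨rfl, rfl, rfl, rfl, rfl⟩ := h
      exact ⟨_, ⟨_, _, _, hT, hsat, rfl⟩, rfl⟩
    · exact (hf h.1).elim
  · rintro ⟨_, ⟨φ, up, ℓ', hT, hsat, rfl⟩, rfl⟩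
    exact ⟨φ, up, _, .inl ⟨_, _, _, _, _, hT, rfl⟩, hsat, rfl⟩

theorem radet_synT (hdet : RADet D T) (hfin : ∀ a φ up ℓ', (ℓf, a, φ, up, ℓ') ∉ T) :
    RADet D (synT T ℓi ℓf) := by
  rintro ⟨ℓ | _, ν⟩ i
  · by_cases hf : ℓ = ℓf
    · subst hf
      rw [post_synT_final hfin]
      exact Set.subsingleton_singleton
    obtain ⟨a | _, d⟩ := i
    · rw [post_synT_letter hf]
      exact (hdet _ _).image _
    by_cases hi : ℓ = ℓi
    · subst hi
      rw [post_synT_init_star hfin]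
      exact Set.subsingleton_singleton
    · rw [post_synT_star hi hf]
      exact Set.subsingleton_singleton
  · rw [post_synT_reset]
    exact Set.subsingleton_singleton

theorem post_synT_nonempty (hfin : ∀ a φ up ℓ', (ℓf, a, φ, up, ℓ') ∉ T)
    (hcomp : ∀ (q : Config L R D) (i : A × D), q.1 ≠ ℓf → (post T q i).Nonempty)
    (q : Config (L ⊕ Unit) R D) (i : (A ⊕ Unit) × D) : (post (synT T ℓi ℓf) q i).Nonempty := by
  obtain ⟨ℓ | _, ν⟩ := q
  · by_cases hf : ℓ = ℓf
    · subst hf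
      rw [post_synT_final hfin]
      exact Set.singleton_nonempty _
    obtain ⟨a | _, d⟩ := i
    · rw [post_synT_letter hf]
      exact (hcomp _ _ hf).image _
    by_cases hi : ℓ = ℓi
    · subst hi
      rw [post_synT_init_star hfin]
      exact Set.singleton_nonempty _
    · rw [post_synT_star hi hf]
      exact Set.singleton_nonempty _
  · rw [post_synT_reset]
    exact Set.singleton_nonempty _

/-- The accepting location of `A_syn` is a trap. -/
theorem RARun.synT_final (hfin : ∀ a φ up ℓ', (ℓf, a, φ, up, ℓ') ∉ T) {ν : R → D}
    {w : List ((A ⊕ Unit) × D)} {q : Config (L ⊕ Unit) R D}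
    (h : RARun (synT T ℓi ℓf) (Sum.inl ℓf, ν) w q) : q.1 = Sum.inl ℓf := by
  induction w generalizing ν with
  | nil =>
    cases h
    rfl
  | cons i w ih =>
    cases h with
    | cons hp h =>
      rw [post_synT_final hfin] at hp
      subst hp
      exact ih h

/-- A run of the original automaton is also a run of `A_syn`. -/
theorem RARun.synT {q q' : Config L R D} {w : List (A × D)} (h : RARun T q w q') :
    RARun (synT T ℓi ℓf) (Prod.map Sum.inl id q) (w.map (Prod.map Sum.inl id))
      (Prod.map Sum.inl id q') := by
  induction h with
  | nil q => exact .nil _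
  | cons hp _ ih =>
    obtain ⟨φ, up, ℓ', hT, hsat, rfl⟩ := hp
    exact .cons ⟨φ, up, _, .inl ⟨_, _, _, _, _, hT, rfl⟩, hsat, rfl⟩ ih

/-- As long as the original automaton accepts no word, the ordinary locations visited by a run of
`A_syn` that starts in a reachable configuration stay reachable in the original automaton. -/
theorem RARun.reachable_of_synT (hfin : ∀ a φ up ℓ', (ℓf, a, φ, up, ℓ') ∉ T)
    (hempty : ¬ (raLanguage D T ℓi ℓf).Nonempty) {q q' : Config (L ⊕ Unit) R D}
    {w : List ((A ⊕ Unit) × D)} (h : RARun (_root_.synT T ℓi ℓf) q w q')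
    (hq : ∀ ℓ, q.1 = Sum.inl ℓ → ∃ ν v, RARun T (ℓi, ν) v (ℓ, q.2)) :
    ∀ ℓ, q'.1 = Sum.inl ℓ → ∃ ν v, RARun T (ℓi, ν) v (ℓ, q'.2) := by
  induction h with
  | nil => exact hq
  | @cons q p q'' i w hp _ ih =>
    refine ih ?_
    obtain ⟨m | _, ν⟩ := q
    · obtain ⟨ν₀, v, hv⟩ := hq m rfl
      by_cases hf : m = ℓf
      · subst hf
        exact (hempty ⟨v, ν₀, ν, hv⟩).elim
      obtain ⟨a | _, d⟩ := i
      · rw [post_synT_letter hf] at hp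
        obtain ⟨⟨m', ν'⟩, hp, rfl⟩ := hp
        intro ℓ hℓ
        cases hℓ
        exact ⟨ν₀, v ++ [(a, d)], hv.append (.cons hp (.nil _))⟩
      by_cases hi : m = ℓi
      · subst hi
        rw [post_synT_init_star hfin] at hp
        subst hp
        intro ℓ hℓ
        cases hℓ
        exact ⟨_, [], .nil _⟩
      · rw [post_synT_star hi hf] at hp
        subst hp
        intro ℓ hℓ
        cases hℓ
    · rw [post_synT_reset] at hp
      subst hp
      intro ℓ hℓ
      cases hℓ
      exact ⟨_, [], .nil _⟩

/-- Two `★`s lead every configuration of `A_syn` to the initial or the accepting location. -/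
theorem RARun.synT_star_star (hfin : ∀ a φ up ℓ', (ℓf, a, φ, up, ℓ') ∉ T) (d : D)
    (q : Config (L ⊕ Unit) R D) :
    ∃ ℓ, (ℓ = ℓi ∨ ℓ = ℓf) ∧ RARun (_root_.synT T ℓi ℓf) q
      [(Sum.inr (), d), (Sum.inr (), d)] (Sum.inl ℓ, fun _ => d) := by
  obtain ⟨ℓ | _, ν⟩ := q
  · by_cases hf : ℓ = ℓf
    · subst hf
      refine ⟨ℓ, .inr rfl, .cons (q' := (Sum.inl ℓ, fun _ => d)) ?_ (.cons ?_ (.nil _))⟩ <;>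
        rw [post_synT_final hfin] <;> rfl
    by_cases hi : ℓ = ℓi
    · subst hi
      refine ⟨ℓ, .inl rfl, .cons (q' := (Sum.inl ℓ, fun _ => d)) ?_ (.cons ?_ (.nil _))⟩ <;>
        rw [post_synT_init_star hfin] <;> rfl
    · refine ⟨ℓi, .inl rfl, .cons (q' := (Sum.inr (), fun _ => d)) ?_ (.cons ?_ (.nil _))⟩
      · rw [post_synT_star hi hf]
        rfl
      · rw [post_synT_reset]
        rfl
  · refine ⟨ℓi, .inl rfl, .cons (q' := (Sum.inl ℓi, fun _ => d)) ?_ (.cons ?_ (.nil _))⟩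
    · rw [post_synT_reset]
      rfl
    · rw [post_synT_init_star hfin]
      rfl

/-- Acceptance does not depend on the initial register contents. -/
theorem exists_run_of_mem_raLanguage
    (hindep : ∀ (i : A × D) (ν ν' : R → D), post T (ℓi, ν) i = post T (ℓi, ν') i)
    {w : List (A × D)} (hw : w ∈ raLanguage D T ℓi ℓf) (ν : R → D) :
    ∃ ν', RARun T (ℓi, ν) w (ℓf, ν') := by
  obtain ⟨ν₀, ν', h⟩ := hw
  cases h with
  | nil => exact ⟨ν, .nil _⟩
  | cons hp h => exact ⟨ν', .cons (hindep _ _ ν ▸ hp) h⟩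

theorem exists_isSync_synT (hdet : RADet D T)
    (hindep : ∀ (i : A × D) (ν ν' : R → D), post T (ℓi, ν) i = post T (ℓi, ν') i)
    (hfin : ∀ a φ up ℓ', (ℓf, a, φ, up, ℓ') ∉ T)
    (hcomp : ∀ (q : Config L R D) (i : A × D), q.1 ≠ ℓf → (post T q i).Nonempty)
    (d : D) (hne : (raLanguage D T ℓi ℓf).Nonempty) :
    ∃ w : List ((A ⊕ Unit) × D), IsSync D (synT T ℓi ℓf) w := by
  obtain ⟨w, hw⟩ := hne
  set u : List ((A ⊕ Unit) × D) :=
    [(Sum.inr (), d), (Sum.inr (), d)] ++ (w.map (Prod.map Sum.inl id) ++ [(Sum.inr (), d)])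
  have key : ∀ q, RARun (synT T ℓi ℓf) q u (Sum.inl ℓf, fun _ => d) := by
    intro q
    obtain ⟨ℓ, hℓ, h⟩ := RARun.synT_star_star (ℓi := ℓi) hfin d q
    obtain ⟨ν', h'⟩ : ∃ ν', RARun (synT T ℓi ℓf) (Sum.inl ℓ, fun _ => d)
        (w.map (Prod.map Sum.inl id)) (Sum.inl ℓf, ν') := by
      rcases hℓ with rfl | rfl
      · obtain ⟨ν', h'⟩ := exists_run_of_mem_raLanguage hindep hw (fun _ => d)
        exact ⟨ν', h'.synT⟩
      · obtain ⟨⟨m, ν'⟩, h'⟩ := RARun.exists_of_total (post_synT_nonempty (ℓi := ℓi) hfin hcomp)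
          (Sum.inl ℓ, fun _ => d) (w.map (Prod.map Sum.inl id))
        obtain rfl : m = Sum.inl ℓ := h'.synT_final hfin
        exact ⟨ν', h'⟩
    refine h.append (h'.append (.cons ?_ (.nil _)))
    rw [post_synT_final hfin]
    rfl
  refine ⟨u, (Sum.inl ℓf, fun _ => d), Set.ext fun q' => ?_⟩
  rw [mem_postWord, Set.mem_singleton_iff]
  constructor
  · rintro ⟨q, -, h⟩
    exact h.unique (radet_synT hdet hfin) (key q)
  · rintro rfl
    exact ⟨(Sum.inr (), fun _ => d), trivial, key _⟩

theorem raLanguage_nonempty_of_isSync (hfin : ∀ a φ up ℓ', (ℓf, a, φ, up, ℓ') ∉ T)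
    (hcomp : ∀ (q : Config L R D) (i : A × D), q.1 ≠ ℓf → (post T q i).Nonempty)
    (d : D) {w : List ((A ⊕ Unit) × D)} (hw : IsSync D (synT T ℓi ℓf) w) :
    (raLanguage D T ℓi ℓf).Nonempty := by
  by_contra hempty
  obtain ⟨q, hq⟩ := hw
  have run (p : Config (L ⊕ Unit) R D) : RARun (synT T ℓi ℓf) p w q := by
    obtain ⟨q', h⟩ := RARun.exists_of_total (post_synT_nonempty (ℓi := ℓi) hfin hcomp) p w
    have hq' : q' ∈ postWord (synT T ℓi ℓf) Set.univ w := mem_postWord.2 ⟨p, trivial, h⟩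
    rw [hq, Set.mem_singleton_iff] at hq'
    exact hq' ▸ h
  obtain ⟨ν, v, h⟩ := (run (Sum.inr (), fun _ => d)).reachable_of_synT hfin hempty
    (fun _ h => by cases h) ℓf ((run (Sum.inl ℓf, fun _ => d)).synT_final hfin)
  exact hempty ⟨v, ν, q.2, h⟩

end SynAutomaton

theorem stmt9 {L A R D : Type*} [Finite L] [Finite A] [Finite R] [Infinite D]
    (T : Set (RATrans L A R)) (ℓi ℓf : L)
    (hdet : RADet D T)
    -- all transitions leaving `ℓi` update all registers
    (hinit : ∀ a φ up ℓ', (ℓi, a, φ, up, ℓ') ∈ T → up = Set.univ)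
    -- the first step does not depend on the initial register contents
    (hindep : ∀ (i : A × D) (ν ν' : R → D), post T (ℓi, ν) i = post T (ℓi, ν') i)
    -- `ℓf` has no outgoing transitions
    (hfin : ∀ a φ up ℓ', (ℓf, a, φ, up, ℓ') ∉ T)
    -- completeness outside `ℓf`
    (hcomp : ∀ (q : Config L R D) (i : A × D), q.1 ≠ ℓf → ∃! q', q' ∈ post T q i) :
    RADet D (synT T ℓi ℓf) ∧
    ((raLanguage D T ℓi ℓf).Nonempty ↔
      ∃ w : List ((A ⊕ Unit) × D), IsSync D (synT T ℓi ℓf) w) := by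
  have hne : ∀ (q : Config L R D) (i : A × D), q.1 ≠ ℓf → (post T q i).Nonempty :=
    fun q i hq => (hcomp q i hq).exists
  obtain ⟨d⟩ : Nonempty D := inferInstance
  exact ⟨radet_synT hdet hfin, exists_isSync_synT hdet hindep hfin hne d,
    fun ⟨_, hw⟩ => raLanguage_nonempty_of_isSync hfin hne d hw⟩
end

section
/- Fix an infinite data domain $D$. A register automaton is a tuple $A=(L,R,\Sigma,T)$ with finite sets $L$ of locations, $R$ of registers and $\Sigma$ of letters, and a set $T$ of transitions $\ell\xrightarrow{a,\varphi,up}\ell'$ with $\ell,\ell'\in L$, $a\in\Sigma$, $up\subseteq R$, and $\varphi$ a guard built from $\mathrm{true}$ and atoms $(=r)$, $r\in R$, by conjunction and negation; $(\nu,d)\in D^R\times D$ satisfies $(=r)$ iff $\nu(r)=d$. A configuration is a pair $(\ell,\nu)\in L\times D^R$. On input $(a,d)\in\Sigma\times D$ the above transition may be fired from $(\ell,\nu)$ if $(\nu,d)$ satisfies $\varphi$, and leads to $(\ell',\nu[up:=d])$, i.e. the registers in $up$ are set to $d$ and the others are unchanged; $\mathrm{post}((\ell,\nu),(a,d))$ is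 the set of all configurations so obtained, and $\mathrm{post}$ is extended to sets of configurations by union and to data words (finite words over $\Sigma\times D$) by iteration. $A$ is complete if $\mathrm{post}(q,(a,d))\neq\emptyset$ for all configurations $q$ and inputs $(a,d)$. Given $\ell_{is}\in L$ and $L_{acc}\subseteq L$, the language of $A$ is the set of data words $w$ such that, for some $\nu,\nu'\in D^R$ and some $\ell'\in L_{acc}$, there is a run over $w$ from $(\ell_{is},\nu)$ to $(\ell',\nu')$. A nonempty data word $w$ is synchronizing if $\mathrm{post}(L\times D^R,w)$ is a singleton. Let $A=(L,R,\Sigma,T)$ be a complete (in general nondeterministic) register automaton with a designated initial location $\ell_{is}$ and a designated set $L_{acc}\subseteq L$ of accepting locations. Assume that all transitions leaving $\ell_{is}$ update all registers, and that their firing does not depend on the initial register contents: for every input $(a,d)\in\Sigma\times D$, the set of target locations of the transitions that may be fired from $(\ell_{is},\nu)$ on $(a,d)$ is the same for all $\nu\in D^R$ (for instance, all these transitions have the guard $\mathrm{true}$). Let $A_{syn}$ be the register automaton with locations $L\cup\{\mathsf{reset},\mathsf{synch}\}$ ($\mathsf{reset},\mathsf{synch}\notin L$ distinct), registers $R$,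 alphabet $\Sigma\cup\{\#,\star\}$ ($\#,\star\notin\Sigma$ distinct), and transition relation obtained from $T$ by adding the following transitions, all with guard $\mathrm{true}$ and updating all registers: $\mathsf{synch}\xrightarrow{a}\mathsf{synch}$ for every $a\in\Sigma\cup\{\#,\star\}$; $\mathsf{reset}\xrightarrow{\star}\ell_{is}$, and $\mathsf{reset}\xrightarrow{a}\mathsf{reset}$ for every $a\in\Sigma\cup\{\#\}$; $\ell\xrightarrow{\star}\ell_{is}$ for every $\ell\in L$; $\ell\xrightarrow{\#}\mathsf{synch}$ for every $\ell\in L\setminus L_{acc}$; and $\ell\xrightarrow{\#}\mathsf{reset}$ for every $\ell\in L_{acc}$. Then there exists a data word over $\Sigma\times D$ not in the language of $A$ if and only if $A_{syn}$ has a synchronizing data word. -/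
namespace RegAut

universe u v w x

/-- Register constraints over a set `R` of registers: built from the atom `true` and
atoms `= r` for `r ∈ R` using conjunction and negation. -/
inductive Guard (R : Type u) : Type u
  | tt : Guard R
  | eqReg : R → Guard R
  | conj : Guard R → Guard R → Guard R
  | neg : Guard R → Guard R

/-- Satisfaction of a register constraint by a register valuation `ν` and a datum `d`. -/
def Guard.Sat {R : Type u} {D : Type v} (ν : R → D) (d : D) : Guard R → Prop
  | .tt => True
  | .eqReg r => ν r = d
  | .conj φ ψ => Guard.Sat ν d φ ∧ Guard.Sat ν d ψ
  | .neg φ => ¬ Guard.Sat ν d φ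

/-- A transition `src --(letter, guard, upd)--> tgt`, where `upd` is the set of updated registers. -/
@[ext]
structure Trans (L : Type u) (R : Type v) (A : Type w) where
  src : L
  letter : A
  guard : Guard R
  upd : Set R
  tgt : L

/-- A register automaton with locations `L`, registers `R` and alphabet `A`, given by its
transition relation. -/
structure RA (L : Type u) (R : Type v) (A : Type w) where
  trans : Set (Trans L R A)

/-- A configuration: a location together with a register valuation. -/
abbrev Config (L : Type u) (R : Type v) (D : Type x) := L × (R → D)

/-- A data word over the alphabet `A` and the data domain `D`. -/
abbrev DataWord (A : Type w) (D : Type x) := List (A × D)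

open Classical in
/-- The updated valuation `ν[up := d]`. -/
noncomputable def update {R : Type v} {D : Type x} (ν : R → D) (up : Set R) (d : D) : R → D :=
  fun r => if r ∈ up then d else ν r

namespace RA

variable {L : Type u} {R : Type v} {A : Type w} {D : Type x}

/-- The transition `t` may be fired from the configuration `q` on the input `i`. -/
def Enabled (M : RA L R A) (q : Config L R D) (i : A × D) (t : Trans L R A) : Prop :=
  t ∈ M.trans ∧ t.src = q.1 ∧ t.letter = i.1 ∧ t.guard.Sat q.2 i.2

/-- The set of successors of a configuration on an input. -/
def post (M : RA L R A) (q : Config L R D) (i : A × D) : Set (Config L R D) :=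
  {q' | ∃ t, M.Enabled q i t ∧ q' = (t.tgt, update q.2 t.upd i.2)}

/-- `post` extended to sets of configurations by union and to data words by iteration. -/
def postWord (M : RA L R A) : Set (Config L R D) → DataWord A D → Set (Config L R D)
  | S, [] => S
  | S, i :: w => M.postWord (⋃ q ∈ S, M.post q i) w

/-- `M.Run q w q'`: there is a run of `M` over the data word `w` from `q` to `q'`. -/
inductive Run (M : RA L R A) : Config L R D → DataWord A D → Config L R D → Prop
  | nil (q : Config L R D) : Run M q [] q
  | cons {q q₁ q' : Config L R D} {i : A × D} {w : DataWord A D} :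
      q₁ ∈ M.post q i → Run M q₁ w q' → Run M q (i :: w) q'

/-- Completeness (over the data domain `D`): every configuration has at least one successor on
every input. -/
def Complete (M : RA L R A) (D : Type x) : Prop :=
  ∀ (q : Config L R D) (i : A × D), (M.post q i).Nonempty

/-- The language of `M` with initial location `ini` and set `acc` of accepting locations; the
initial register valuation is arbitrary. -/
def language (M : RA L R A) (D : Type x) (ini : L) (acc : Set L) : Set (DataWord A D) :=
  {w | ∃ (ν ν' : R → D) (ℓ' : L), ℓ' ∈ acc ∧ M.Run (ini, ν) w (ℓ', ν')}

/-- A (nonempty) data word is synchronizing if it takes the set of all configurations to a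
single configuration. -/
def IsSynchronizing (M : RA L R A) (w : DataWord A D) : Prop :=
  w ≠ [] ∧ ∃ q : Config L R D, M.postWord Set.univ w = {q}

/-- All transitions leaving `ini` update all registers. -/
def UpdatesAllFrom (M : RA L R A) (ini : L) : Prop :=
  ∀ t ∈ M.trans, t.src = ini → t.upd = Set.univ

/-- On every input, the set of locations reached by the transitions that may be fired in the
location `ini` does not depend on the register valuation. This is the case, for instance, if all
transitions leaving `ini` have the guard `true`. -/
def ValuationIndependentFrom (M : RA L R A) (D : Type x) (ini : L) : Prop :=
  ∀ (ν ν' : R → D) (i : A × D),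
    {ℓ' | ∃ t, M.Enabled (ini, ν) i t ∧ t.tgt = ℓ'} =
      {ℓ' | ∃ t, M.Enabled (ini, ν') i t ∧ t.tgt = ℓ'}

end RA

/-- The locations `L ∪ {reset, synch}`. -/
inductive SynLoc (L : Type u) : Type u
  | loc : L → SynLoc L
  | reset : SynLoc L
  | synch : SynLoc L

/-- The alphabet `Σ ∪ {#, ★}`. -/
inductive SynLetter (A : Type w) : Type w
  | letter : A → SynLetter A
  | hash : SynLetter A
  | star : SynLetter A

/-- The transition `ℓ --(a, true, update all registers)--> ℓ'`. -/
def freeTrans {L : Type u} (R : Type v) {A : Type w} (ℓ : L) (a : A) (ℓ' : L) : Trans L R A :=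
  ⟨ℓ, a, Guard.tt, Set.univ, ℓ'⟩

/-- A transition of the given automaton, seen as a transition over `L ∪ {reset, synch}` and
`Σ ∪ {#, ★}`. -/
def Trans.embed {L : Type u} {R : Type v} {A : Type w} (t : Trans L R A) :
    Trans (SynLoc L) R (SynLetter A) :=
  ⟨.loc t.src, .letter t.letter, t.guard, t.upd, .loc t.tgt⟩

/-- The automaton `A_syn`. -/
def RA.syn {L : Type u} {R : Type v} {A : Type w} (M : RA L R A) (ini : L) (acc : Set L) :
    RA (SynLoc L) R (SynLetter A) where
  trans :=
    Trans.embed '' M.trans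
    ∪ {t | ∃ a : SynLetter A, t = freeTrans R .synch a .synch}
    ∪ {freeTrans R .reset .star (.loc ini)}
    ∪ {t | ∃ a : SynLetter A, a ≠ .star ∧ t = freeTrans R .reset a .reset}
    ∪ {t | ∃ ℓ : L, t = freeTrans R (.loc ℓ) .star (.loc ini)}
    ∪ {t | ∃ ℓ : L, ℓ ∉ acc ∧ t = freeTrans R (.loc ℓ) .hash .synch}
    ∪ {t | ∃ ℓ : L, ℓ ∈ acc ∧ t = freeTrans R (.loc ℓ) .hash .reset}

end RegAut

namespace RegAut

universe u v w x

variable {L : Type u} {R : Type v} {A : Type w} {D : Type x}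

theorem update_univ (ν : R → D) (d : D) : update ν Set.univ d = fun _ => d := by
  funext r
  simp [update]

namespace RA

theorem mem_postWord {M : RA L R A} {S : Set (Config L R D)} {w : DataWord A D}
    {q' : Config L R D} : q' ∈ M.postWord S w ↔ ∃ q ∈ S, M.Run q w q' := by
  induction w generalizing S with
  | nil =>
    constructor
    · intro h
      exact ⟨q', h, .nil q'⟩
    · rintro ⟨q, hq, hrun⟩
      cases hrun
      exact hq
  | cons i w ih =>
    rw [postWord, ih]
    constructor
    · rintro ⟨q₁, hq₁, hrun⟩
      simp only [Set.mem_iUnion] at hq₁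
      obtain ⟨q, hq, hpost⟩ := hq₁
      exact ⟨q, hq, .cons hpost hrun⟩
    · rintro ⟨q, hq, hrun⟩
      cases hrun with
      | cons hpost hrun => exact ⟨_, Set.mem_biUnion hq hpost, hrun⟩

theorem run_append {M : RA L R A} {w₁ w₂ : DataWord A D} {q q' : Config L R D} :
    M.Run q (w₁ ++ w₂) q' ↔ ∃ q₁, M.Run q w₁ q₁ ∧ M.Run q₁ w₂ q' := by
  induction w₁ generalizing q with
  | nil =>
    constructor
    · intro h
      exact ⟨q, .nil q, h⟩
    · rintro ⟨q₁, h₁, h₂⟩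
      cases h₁
      exact h₂
  | cons i w₁ ih =>
    constructor
    · intro h
      cases h with
      | cons hpost hrun =>
        obtain ⟨q₁, h₁, h₂⟩ := ih.1 hrun
        exact ⟨q₁, .cons hpost h₁, h₂⟩
    · rintro ⟨q₁, h₁, h₂⟩
      cases h₁ with
      | cons hpost hrun => exact .cons hpost (ih.2 ⟨q₁, hrun, h₂⟩)

theorem Complete.exists_run {M : RA L R A} (hM : M.Complete D) (w : DataWord A D)
    (q : Config L R D) : ∃ q', M.Run q w q' := by
  induction w generalizing q with
  | nil => exact ⟨q, .nil q⟩
  | cons i w ih =>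
    obtain ⟨q₁, h₁⟩ := hM q i
    obtain ⟨q', h⟩ := ih q₁
    exact ⟨q', .cons h₁ h⟩

/-- If the first step out of `ini` forgets the register contents, then acceptance of a word does
not depend on the initial valuation. -/
theorem exists_accepting_run {M : RA L R A} {ini : L} {acc : Set L}
    (hupdate : M.UpdatesAllFrom ini) (hguard : M.ValuationIndependentFrom D ini)
    {w : DataWord A D} (hw : w ∈ M.language D ini acc) (ν : R → D) :
    ∃ ℓ' ∈ acc, ∃ ν', M.Run (ini, ν) w (ℓ', ν') := by
  obtain ⟨ν₀, ν', ℓ', hacc, hrun⟩ := hw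
  cases hrun with
  | nil => exact ⟨ini, hacc, ν, .nil _⟩
  | @cons _ q₁ _ i w hpost hrun =>
    obtain ⟨t, ht, rfl⟩ := hpost
    have hmem : t.tgt ∈ {ℓ' | ∃ t, M.Enabled (ini, ν₀) i t ∧ t.tgt = ℓ'} := ⟨t, ht, rfl⟩
    rw [hguard ν₀ ν i] at hmem
    obtain ⟨s, hs, hst⟩ := hmem
    refine ⟨ℓ', hacc, ν', .cons ⟨s, hs, rfl⟩ ?_⟩
    rw [hupdate t ht.1 ht.2.1, update_univ] at hrun
    rw [hupdate s hs.1 hs.2.1, update_univ, hst]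
    exact hrun

end RA

/-- A data word over `A`, seen as a data word over `A ∪ {#, ★}`. -/
def DataWord.embed (w : DataWord A D) : DataWord (SynLetter A) D :=
  w.map fun i => (SynLetter.letter i.1, i.2)

namespace RA

variable {M : RA L R A} {ini : L} {acc : Set L}

theorem mem_post_of_freeTrans {M : RA L R A} {ℓ ℓ' : L} {a : A}
    (h : freeTrans R ℓ a ℓ' ∈ M.trans) (ν : R → D) (d : D) :
    (ℓ', fun _ => d) ∈ M.post (ℓ, ν) (a, d) :=
  ⟨_, ⟨h, rfl, rfl, trivial⟩, by simp [freeTrans, update_univ]⟩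

theorem mem_syn_trans {t : Trans (SynLoc L) R (SynLetter A)} :
    t ∈ (M.syn ini acc).trans ↔
      (∃ s ∈ M.trans, s.embed = t) ∨ (∃ a, t = freeTrans R .synch a .synch) ∨
      t = freeTrans R .reset .star (.loc ini) ∨
      (∃ a, a ≠ .star ∧ t = freeTrans R .reset a .reset) ∨
      (∃ ℓ, t = freeTrans R (.loc ℓ) .star (.loc ini)) ∨
      (∃ ℓ, ℓ ∉ acc ∧ t = freeTrans R (.loc ℓ) .hash .synch) ∨
      (∃ ℓ, ℓ ∈ acc ∧ t = freeTrans R (.loc ℓ) .hash .reset) := by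
  simp only [syn, Set.mem_union, Set.mem_image, Set.mem_ofPred_eq, Set.mem_singleton_iff, or_assoc]

theorem post_syn_synch (ν : R → D) (i : SynLetter A × D) :
    (M.syn ini acc).post (.synch, ν) i = {(.synch, fun _ => i.2)} := by
  ext q
  constructor
  · rintro ⟨t, ⟨ht, hsrc, hlet, -⟩, rfl⟩
    rcases mem_syn_trans.1 ht with ⟨s, -, rfl⟩ | ⟨a, rfl⟩ | rfl | ⟨a, -, rfl⟩ | ⟨ℓ, rfl⟩ |
      ⟨ℓ, -, rfl⟩ | ⟨ℓ, -, rfl⟩ <;> simp_all [freeTrans, Trans.embed, update_univ]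
  · rintro rfl
    exact mem_post_of_freeTrans (mem_syn_trans.2 (.inr (.inl ⟨i.1, rfl⟩))) ν i.2

theorem post_syn_letter (ℓ : L) (ν : R → D) (a : A) (d : D) :
    (M.syn ini acc).post (.loc ℓ, ν) (.letter a, d) =
      (fun q => (.loc q.1, q.2)) '' M.post (ℓ, ν) (a, d) := by
  ext q
  constructor
  · rintro ⟨t, ⟨ht, hsrc, hlet, hsat⟩, rfl⟩
    rcases mem_syn_trans.1 ht with ⟨s, hs, rfl⟩ | ⟨a, rfl⟩ | rfl | ⟨a, -, rfl⟩ | ⟨ℓ, rfl⟩ |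
      ⟨ℓ, -, rfl⟩ | ⟨ℓ, -, rfl⟩
    · exact ⟨_, ⟨s, ⟨hs, SynLoc.loc.inj hsrc, SynLetter.letter.inj hlet, hsat⟩, rfl⟩, rfl⟩
    all_goals simp [freeTrans] at hsrc hlet
  · rintro ⟨_, ⟨s, ⟨hs, hsrc, hlet, hsat⟩, rfl⟩, rfl⟩
    exact ⟨s.embed, ⟨mem_syn_trans.2 (.inl ⟨s, hs, rfl⟩), congrArg _ hsrc, congrArg _ hlet, hsat⟩,
      rfl⟩

theorem mem_post_syn_star (ℓ : L) (ν : R → D) (d : D) :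
    (.loc ini, fun _ => d) ∈ (M.syn ini acc).post (.loc ℓ, ν) (.star, d) :=
  mem_post_of_freeTrans
    (mem_syn_trans.2 (.inr (.inr (.inr (.inr (.inl ⟨ℓ, rfl⟩)))))) ν d

theorem mem_post_syn_reset_star (ν : R → D) (d : D) :
    (.loc ini, fun _ => d) ∈ (M.syn ini acc).post (.reset, ν) (.star, d) :=
  mem_post_of_freeTrans (mem_syn_trans.2 (.inr (.inr (.inl rfl)))) ν d

theorem mem_post_syn_reset {a : SynLetter A} (ha : a ≠ .star) (ν : R → D) (d : D) :
    (.reset, fun _ => d) ∈ (M.syn ini acc).post (.reset, ν) (a, d) :=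
  mem_post_of_freeTrans (mem_syn_trans.2 (.inr (.inr (.inr (.inl ⟨a, ha, rfl⟩))))) ν d

theorem mem_post_syn_hash_of_mem {ℓ : L} (hℓ : ℓ ∈ acc) (ν : R → D) (d : D) :
    (.reset, fun _ => d) ∈ (M.syn ini acc).post (.loc ℓ, ν) (.hash, d) :=
  mem_post_of_freeTrans
    (mem_syn_trans.2 (.inr (.inr (.inr (.inr (.inr (.inr ⟨ℓ, hℓ, rfl⟩))))))) ν d

theorem eq_of_mem_post_syn_star {q q' : Config (SynLoc L) R D} {d : D}
    (h : q' ∈ (M.syn ini acc).post q (.star, d)) :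
    q' = (.loc ini, fun _ => d) ∨ q' = (.synch, fun _ => d) := by
  obtain ⟨t, ⟨ht, hsrc, hlet, -⟩, rfl⟩ := h
  rcases mem_syn_trans.1 ht with ⟨s, -, rfl⟩ | ⟨a, rfl⟩ | rfl | ⟨a, ha, rfl⟩ | ⟨ℓ, rfl⟩ |
    ⟨ℓ, -, rfl⟩ | ⟨ℓ, -, rfl⟩ <;> simp_all [freeTrans, Trans.embed, update_univ]

theorem eq_of_mem_post_syn_hash {ℓ : L} (hℓ : ℓ ∉ acc) {ν : R → D} {d : D}
    {q' : Config (SynLoc L) R D} (h : q' ∈ (M.syn ini acc).post (.loc ℓ, ν) (.hash, d)) :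
    q' = (.synch, fun _ => d) := by
  obtain ⟨t, ⟨ht, hsrc, hlet, -⟩, rfl⟩ := h
  rcases mem_syn_trans.1 ht with ⟨s, -, rfl⟩ | ⟨a, rfl⟩ | rfl | ⟨a, ha, rfl⟩ | ⟨ℓ, rfl⟩ |
    ⟨ℓ, -, rfl⟩ | ⟨ℓ, hacc, rfl⟩ <;> simp_all [freeTrans, Trans.embed, update_univ]

theorem exists_run_syn_synch (w : DataWord (SynLetter A) D) (ν : R → D) :
    ∃ ν', (M.syn ini acc).Run (.synch, ν) w (.synch, ν') := by
  induction w generalizing ν with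
  | nil => exact ⟨ν, .nil _⟩
  | cons i w ih =>
    obtain ⟨ν', h⟩ := ih fun _ => i.2
    exact ⟨ν', .cons (by rw [post_syn_synch]; rfl) h⟩

theorem fst_eq_synch_of_run {w : DataWord (SynLetter A) D} {ν : R → D}
    {q : Config (SynLoc L) R D} (h : (M.syn ini acc).Run (.synch, ν) w q) : q.1 = .synch := by
  induction w generalizing ν with
  | nil => cases h; rfl
  | cons i w ih =>
    cases h with
    | cons hpost hrun =>
      rw [post_syn_synch] at hpost
      obtain rfl := hpost
      exact ih hrun

theorem run_syn_embed {w : DataWord A D} {ℓ : L} {ν : R → D} {q : Config (SynLoc L) R D} :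
    (M.syn ini acc).Run (.loc ℓ, ν) w.embed q ↔
      ∃ ℓ' ν', q = (.loc ℓ', ν') ∧ M.Run (ℓ, ν) w (ℓ', ν') := by
  induction w generalizing ℓ ν with
  | nil =>
    constructor
    · intro h
      cases h
      exact ⟨ℓ, ν, rfl, .nil _⟩
    · rintro ⟨ℓ', ν', rfl, h⟩
      cases h
      exact .nil _
  | cons i w ih =>
    constructor
    · intro h
      cases h with
      | cons hpost hrun =>
        rw [post_syn_letter] at hpost
        obtain ⟨q₁, hq₁, rfl⟩ := hpost
        obtain ⟨ℓ', ν', rfl, h⟩ := ih.1 hrun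
        exact ⟨ℓ', ν', rfl, .cons hq₁ h⟩
    · rintro ⟨ℓ', ν', rfl, h⟩
      cases h with
      | @cons _ q₁ _ _ _ hpost hrun =>
        refine .cons (q₁ := (.loc q₁.1, q₁.2)) ?_ (ih.2 ⟨ℓ', ν', rfl, hrun⟩)
        rw [post_syn_letter]
        exact ⟨q₁, hpost, rfl⟩

/-- If `w` is rejected by `M`, then `★ w #` is synchronizing for `A_syn`. -/
theorem isSynchronizing_of_notMem_language {w : DataWord A D} (hw : w ∉ M.language D ini acc)
    (d : D) : (M.syn ini acc).IsSynchronizing ((.star, d) :: (w.embed ++ [(.hash, d)])) := by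
  refine ⟨List.cons_ne_nil _ _, (.synch, fun _ => d), ?_⟩
  ext q
  rw [mem_postWord, Set.mem_singleton_iff]
  constructor
  · rintro ⟨q₀, -, hrun⟩
    cases hrun with
    | cons hstar hrun =>
      obtain ⟨q₁, h₁, h₂⟩ := run_append.1 hrun
      cases h₂ with
      | cons hhash hnil =>
        cases hnil
        rcases eq_of_mem_post_syn_star hstar with rfl | rfl
        · obtain ⟨ℓ', ν', rfl, h⟩ := run_syn_embed.1 h₁
          exact eq_of_mem_post_syn_hash (fun hacc => hw ⟨_, ν', ℓ', hacc, h⟩) hhash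
        · obtain ⟨s, ν⟩ := q₁
          obtain rfl : s = .synch := fst_eq_synch_of_run h₁
          rw [post_syn_synch] at hhash
          exact hhash
  · rintro rfl
    obtain ⟨ν, h⟩ := exists_run_syn_synch (M := M) (ini := ini) (acc := acc) w.embed fun _ : R => d
    refine ⟨(.synch, fun _ => d), trivial,
      .cons ?_ (run_append.2 ⟨_, h, .cons ?_ (.nil _)⟩)⟩ <;> rw [post_syn_synch] <;> rfl

/-- If `M` is universal, then `A_syn` can always avoid `synch`, both from `reset` and after having
read any word over `A` from the initial location. -/
theorem exists_run_syn_ne_synch (hcomplete : M.Complete D) (hupdate : M.UpdatesAllFrom ini)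
    (hguard : M.ValuationIndependentFrom D ini)
    (huniv : ∀ w : DataWord A D, w ∈ M.language D ini acc) (w : DataWord (SynLetter A) D) :
    (∀ ν, ∃ q, q.1 ≠ .synch ∧ (M.syn ini acc).Run (.reset, ν) w q) ∧
      ∀ (u : DataWord A D) (ν : R → D),
        ∃ q, q.1 ≠ .synch ∧ (M.syn ini acc).Run (.loc ini, ν) (u.embed ++ w) q := by
  induction w with
  | nil =>
    refine ⟨fun ν => ⟨(.reset, ν), by simp, .nil _⟩, fun u ν => ?_⟩
    obtain ⟨⟨ℓ', ν'⟩, h⟩ := hcomplete.exists_run u (ini, ν)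
    exact ⟨(.loc ℓ', ν'), by simp, run_append.2 ⟨_, run_syn_embed.2 ⟨ℓ', ν', rfl, h⟩, .nil _⟩⟩
  | cons i w ih =>
    obtain ⟨ihreset, ihini⟩ := ih
    obtain ⟨a, d⟩ := i
    have hreset : ∀ a ≠ SynLetter.star, ∀ ν,
        ∃ q, q.1 ≠ .synch ∧ (M.syn ini acc).Run (.reset, ν) ((a, d) :: w) q := by
      intro a ha ν
      obtain ⟨q, hq, h⟩ := ihreset fun _ => d
      exact ⟨q, hq, .cons (mem_post_syn_reset ha ν d) h⟩
    cases a with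
    | letter a =>
      refine ⟨hreset _ (by simp), fun u ν => ?_⟩
      simpa [DataWord.embed] using ihini (u ++ [(a, d)]) ν
    | hash =>
      refine ⟨hreset _ (by simp), fun u ν => ?_⟩
      obtain ⟨ℓ', hacc, ν', h⟩ := exists_accepting_run hupdate hguard (huniv u) ν
      obtain ⟨q, hq, hrun⟩ := ihreset fun _ => d
      exact ⟨q, hq, run_append.2 ⟨_, run_syn_embed.2 ⟨ℓ', ν', rfl, h⟩,
        .cons (mem_post_syn_hash_of_mem hacc ν' d) hrun⟩⟩
    | star =>
      obtain ⟨q, hq, hrun⟩ := ihini [] fun _ => d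
      refine ⟨fun ν => ⟨q, hq, .cons (mem_post_syn_reset_star ν d) hrun⟩, fun u ν => ?_⟩
      obtain ⟨⟨ℓ', ν'⟩, h⟩ := hcomplete.exists_run u (ini, ν)
      exact ⟨q, hq, run_append.2 ⟨_, run_syn_embed.2 ⟨ℓ', ν', rfl, h⟩,
        .cons (mem_post_syn_star ℓ' ν' d) hrun⟩⟩

end RA

end RegAut

theorem stmt12 {L R A D : Type*} [Finite L] [Finite R] [Finite A] [Infinite D]
    (M : RegAut.RA L R A) (ini : L) (acc : Set L)
    (hcomplete : M.Complete D)
    (hupdate : M.UpdatesAllFrom ini)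
    (hguard : M.ValuationIndependentFrom D ini) :
    (∃ w : RegAut.DataWord A D, w ∉ M.language D ini acc) ↔
      (∃ w : RegAut.DataWord (RegAut.SynLetter A) D, (M.syn ini acc).IsSynchronizing w) := by
  obtain ⟨d⟩ : Nonempty D := inferInstance
  constructor
  · rintro ⟨w, hw⟩
    exact ⟨_, RegAut.RA.isSynchronizing_of_notMem_language hw d⟩
  · rintro ⟨w, -, q, hq⟩
    by_contra! huniv
    obtain ⟨q₁, hne, h₁⟩ :=
      (RegAut.RA.exists_run_syn_ne_synch hcomplete hupdate hguard huniv w).1 fun _ => d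
    obtain ⟨ν, h₂⟩ :=
      RegAut.RA.exists_run_syn_synch (M := M) (ini := ini) (acc := acc) w fun _ => d
    have e₁ : q₁ = q := by
      rw [← Set.mem_singleton_iff, ← hq]
      exact RegAut.RA.mem_postWord.2 ⟨_, trivial, h₁⟩
    have e₂ : (.synch, ν) = q := by
      rw [← Set.mem_singleton_iff, ← hq]
      exact RegAut.RA.mem_postWord.2 ⟨_, trivial, h₂⟩
    exact hne (by rw [e₁, ← e₂])
end
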